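/- (Existence and uniqueness of RREF) Let A be an n × m matrix over F. Then there exists exactly one n × m matrix M over F such that M is in reduced row echelon form and the row space of M equals the row space of A. In particular, if M and N are both n × m matrices in reduced row echelon form with equal row spaces, then M = N. -/

import Mathlib

/-!
The first nonzero entry of a nonzero element of `V` sits at a lime index, so an element of `V` is
determined by its entries at the lime indices (`eq_zero_of_limeIndex`). Lime-basic elements are
therefore unique, and they exist because the entries at later lime indices can be cleared from left
to right (`exists_isLimeBasic`). At the lime indices the lime-basic elements look like unit vectors;
hence they are linearly independent, so there are at most `n` of them when `V` is spanned by `n`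
vectors, and by the determination principle they span `V`. Listing them gives the RREF matrix. Its
uniqueness follows since a strictly increasing enumeration of the set of lime indices is unique.
-/

variable {F : Type*} [Field F] {m : ℕ}

/-- A (nonzero) vector `x` originates at position `j` if `x j ≠ 0` and all earlier entries vanish. -/
def OriginatesAt (x : Fin m → F) (j : Fin m) : Prop :=
  x j ≠ 0 ∧ ∀ k, k < j → x k = 0

/-- `j` is a lime index of `V` if some element of `V` originates at `j`. -/
def IsLimeIndex (V : Submodule F (Fin m → F)) (j : Fin m) : Prop :=
  ∃ x ∈ V, OriginatesAt x j

/-- `w` is the lime-basic element of `V` for the lime index `i`: it lies in `V`,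
originates at `i` with entry `1`, and vanishes at every later lime index of `V`. -/
def IsLimeBasic (V : Submodule F (Fin m → F)) (i : Fin m) (w : Fin m → F) : Prop :=
  w ∈ V ∧ w i = 1 ∧ (∀ k, k < i → w k = 0) ∧ (∀ j, IsLimeIndex V j → i < j → w j = 0)

/-- The row space of a matrix: the span of its rows. -/
def rowSpace {n m : ℕ} (M : Matrix (Fin n) (Fin m) F) : Submodule F (Fin m → F) :=
  Submodule.span F (Set.range fun i : Fin n => M i)

/-- `M` is in reduced row echelon form: for some `r ≤ n`, the rows of index `≥ r` are zero
and the rows of index `< r` are exactly the lime-basic elements of the row space of `M`,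
listed in increasing order of the corresponding lime indices. -/
def IsRREF {n m : ℕ} (M : Matrix (Fin n) (Fin m) F) : Prop :=
  ∃ r : ℕ, r ≤ n ∧ ∃ p : Fin r → Fin m, StrictMono p ∧
    (∀ j, IsLimeIndex (rowSpace M) j ↔ j ∈ Set.range p) ∧
    (∀ (i : Fin n) (h : (i : ℕ) < r), IsLimeBasic (rowSpace M) (p ⟨i, h⟩) (M i)) ∧
    (∀ i : Fin n, r ≤ (i : ℕ) → M i = 0)

theorem eq_zero_of_limeIndex {V : Submodule F (Fin m → F)} {x : Fin m → F} (hx : x ∈ V)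
    (h : ∀ j, IsLimeIndex V j → x j = 0) : x = 0 := by
  have key : ∀ j, x j = 0 := by
    intro j
    induction j using WellFoundedLT.induction with
    | ind j ih =>
      by_contra hj
      exact hj (h j ⟨x, hx, hj, ih⟩)
  exact funext key

theorem IsLimeBasic.apply_eq {V : Submodule F (Fin m → F)} {i j : Fin m} {w : Fin m → F}
    (h : IsLimeBasic V i w) (hj : IsLimeIndex V j) : w j = if i = j then 1 else 0 := by
  obtain ⟨-, h1, h2, h3⟩ := h
  rcases lt_trichotomy i j with hij | rfl | hij
  · rw [h3 j hj hij, if_neg hij.ne]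
  · simp [h1]
  · rw [h2 j hij, if_neg hij.ne']

theorem IsLimeBasic.eq {V : Submodule F (Fin m → F)} {i : Fin m} {w w' : Fin m → F}
    (h : IsLimeBasic V i w) (h' : IsLimeBasic V i w') : w = w' := by
  refine sub_eq_zero.mp (eq_zero_of_limeIndex (V.sub_mem h.1 h'.1) fun j hj => ?_)
  simp [h.apply_eq hj, h'.apply_eq hj]

theorem exists_isLimeBasic {V : Submodule F (Fin m → F)} {i : Fin m} (hi : IsLimeIndex V i) :
    ∃ w, IsLimeBasic V i w := by
  -- `w` is cleared at the lime indices in the window `(i, t)`, and `t` grows up to `m`.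
  have key : ∀ t : ℕ, ∃ w ∈ V, w i = 1 ∧ (∀ k, k < i → w k = 0) ∧
      (∀ j, IsLimeIndex V j → i < j → (j : ℕ) < t → w j = 0) := by
    intro t
    induction t with
    | zero =>
      obtain ⟨x, hx, hxi, hlt⟩ := hi
      exact ⟨(x i)⁻¹ • x, V.smul_mem _ hx, by simp [hxi],
        fun k hk => by simp [hlt k hk], fun j _ _ h => absurd h (Nat.not_lt_zero _)⟩
    | succ t ih =>
      obtain ⟨w, hw, hwi, hlt, hgt⟩ := ih
      by_cases ht : ∃ j : Fin m, (j : ℕ) = t ∧ i < j ∧ IsLimeIndex V j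
      · obtain ⟨j, rfl, hij, x, hx, hxj, hxlt⟩ := ht
        refine ⟨w - (w j * (x j)⁻¹) • x, V.sub_mem hw (V.smul_mem _ hx), ?_, ?_, ?_⟩
        · simp [hwi, hxlt i hij]
        · intro k hk
          simp [hlt k hk, hxlt k (hk.trans hij)]
        · intro k hk hik hkj
          rcases (Nat.lt_succ_iff.mp hkj).lt_or_eq with hlt' | heq
          · simp [hgt k hk hik hlt', hxlt k hlt']
          · obtain rfl : k = j := Fin.ext heq
            simp [hxj]
      · refine ⟨w, hw, hwi, hlt, fun k hk hik hkt => ?_⟩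
        rcases (Nat.lt_succ_iff.mp hkt).lt_or_eq with hlt' | heq
        · exact hgt k hk hik hlt'
        · exact absurd ⟨k, heq, hik, hk⟩ ht
  obtain ⟨w, hw, h1, h2, h3⟩ := key m
  exact ⟨w, hw, h1, h2, fun j hj hij => h3 j hj hij j.isLt⟩

theorem IsRREF.eq_of_rowSpace_eq {n : ℕ} {M N : Matrix (Fin n) (Fin m) F}
    (hM : IsRREF M) (hN : IsRREF N) (h : rowSpace M = rowSpace N) : M = N := by
  obtain ⟨r, -, p, hp, hlime, hrow, hzero⟩ := hM
  obtain ⟨r', -, p', hp', hlime', hrow', hzero'⟩ := hN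
  rw [h] at hlime hrow
  have hrange : Set.range p = Set.range p' := by
    ext j
    rw [← hlime, hlime']
  obtain rfl : r = r' := by
    have := congrArg Set.ncard hrange
    simpa [← Set.image_univ, Set.ncard_image_of_injective _ hp.injective,
      Set.ncard_image_of_injective _ hp'.injective, Set.ncard_univ] using this
  obtain rfl : p = p' := (hp.range_inj hp').mp hrange
  funext i
  by_cases hi : (i : ℕ) < r
  · exact (hrow i hi).eq (hrow' i hi)
  · exact (hzero i (not_lt.mp hi)).trans (hzero' i (not_lt.mp hi)).symm

theorem exists_isRREF {n : ℕ} (A : Matrix (Fin n) (Fin m) F) :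
    ∃ M : Matrix (Fin n) (Fin m) F, IsRREF M ∧ rowSpace M = rowSpace A := by
  classical
  set V := rowSpace A with hV
  let L : Finset (Fin m) := Finset.univ.filter (IsLimeIndex V)
  have hL : ∀ j, j ∈ L ↔ IsLimeIndex V j := fun j => by simp [L]
  let p : Fin L.card ↪o Fin m := L.orderEmbOfFin rfl
  have hrange : ∀ j, IsLimeIndex V j ↔ j ∈ Set.range p := fun j => by
    rw [Finset.range_orderEmbOfFin, Finset.mem_coe, hL]
  choose b hb using fun k => exists_isLimeBasic ((hrange (p k)).mpr ⟨k, rfl⟩)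
  have hbp : ∀ k l, b k (p l) = if k = l then 1 else 0 := fun k l => by
    rw [(hb k).apply_eq ((hrange _).mpr ⟨l, rfl⟩)]
    simp
  have hli : LinearIndependent F fun k => (⟨b k, (hb k).1⟩ : V) := by
    rw [Fintype.linearIndependent_iff]
    intro g hg l
    have := congrFun (congrArg Subtype.val hg) (p l)
    simpa [hbp, Finset.sum_apply] using this
  have hr : L.card ≤ n := by
    have h1 := hli.fintype_card_le_finrank
    have h2 : Module.finrank F V ≤ Fintype.card (Fin n) :=
      finrank_range_le_card (R := F) fun i : Fin n => A i
    simpa using h1.trans h2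
  let M : Matrix (Fin n) (Fin m) F := fun i =>
    if h : (i : ℕ) < L.card then b ⟨i, h⟩ else 0
  have hMlt : ∀ (i : Fin n) (h : (i : ℕ) < L.card), M i = b ⟨i, h⟩ := fun i h => dif_pos h
  have hMge : ∀ i : Fin n, L.card ≤ (i : ℕ) → M i = 0 := fun i h => dif_neg (not_lt.mpr h)
  have hMV : rowSpace M = V := by
    apply le_antisymm
    · refine Submodule.span_le.mpr ?_
      rintro _ ⟨i, rfl⟩
      by_cases hi : (i : ℕ) < L.card
      · simpa only [hMlt i hi, SetLike.mem_coe] using (hb _).1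
      · simp only [hMge i (not_lt.mp hi)]
        exact V.zero_mem
    · intro x hx
      have hxsum : x = ∑ k, x (p k) • b k := by
        refine sub_eq_zero.mp (eq_zero_of_limeIndex
          (V.sub_mem hx (V.sum_mem fun k _ => V.smul_mem _ (hb k).1)) fun j hj => ?_)
        obtain ⟨l, rfl⟩ := (hrange j).mp hj
        simp [Finset.sum_apply, hbp]
      rw [hxsum]
      refine Submodule.sum_mem _ fun k _ => Submodule.smul_mem _ _ (Submodule.subset_span ?_)
      exact ⟨⟨k, k.isLt.trans_le hr⟩, hMlt _ k.isLt⟩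
  refine ⟨M, ⟨L.card, hr, p, p.strictMono, ?_, ?_, hMge⟩, hMV⟩
  · rw [hMV]
    exact hrange
  · intro i hi
    rw [hMV, hMlt i hi]
    exact hb _

/-- Existence and uniqueness of the RREF: every matrix `A` admits a unique RREF matrix
with the same row space; in particular two RREF matrices with equal row spaces coincide. -/
theorem exists_unique_rref (F : Type*) [Field F] (n m : ℕ)
    (A : Matrix (Fin n) (Fin m) F) :
    (∃! M : Matrix (Fin n) (Fin m) F, IsRREF M ∧ rowSpace M = rowSpace A) ∧
    (∀ M N : Matrix (Fin n) (Fin m) F,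
      IsRREF M → IsRREF N → rowSpace M = rowSpace N → M = N) := by
  refine ⟨?_, fun M N hM hN h => hM.eq_of_rowSpace_eq hN h⟩
  obtain ⟨M, hM, hMA⟩ := exists_isRREF A
  exact ⟨M, ⟨hM, hMA⟩, fun N hN => hN.1.eq_of_rowSpace_eq hM (hN.2.trans hMA.symm)⟩
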